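/- The 15 points of Z(H₃) are exactly the pairwise intersection points of the six lines L₁,…,L₆ (so these lines form a star configuration): for each pair 1 ≤ i < j ≤ 6 there is exactly one point P of Z(H₃) with L_i(P) = L_j(P) = 0; every point of Z(H₃) arises this way from exactly one pair (i,j); and no point of Z(H₃) lies on three of the six lines. -/

import Mathlib

/-- The six linear forms of the `H₃` line configuration, as functions on `ℂ³`. -/
noncomputable def H3L (u : ℂ) : Fin 6 → ((Fin 3 → ℂ) → ℂ) :=
  ![fun v => v 1 - (u - 1) * v 2, fun v => v 1 + (u - 1) * v 2,
    fun v => v 0 - u * v 2, fun v => v 0 + u * v 2,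
    fun v => v 0 - (u - 1) * v 1, fun v => v 0 + (u - 1) * v 1]

/-- The 15 points of the `H₃` root-system configuration. -/
noncomputable def H3pts (u : ℂ) : Fin 15 → (Fin 3 → ℂ) :=
  ![![1,0,0], ![0,1,0], ![0,0,1],
    ![1,u,u^2], ![-1,u,u^2], ![1,-u,u^2], ![1,u,-u^2],
    ![u,-u^2,1], ![-u,u^2,1], ![u,u^2,-1], ![u,u^2,1],
    ![u^2,1,-u], ![u^2,-1,u], ![-u^2,1,u], ![u^2,1,u]]

/-- The unique pair of lines through each configuration point. -/
def H3pair : Fin 15 → Fin 6 × Fin 6 :=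
  ![(0,1), (2,3), (4,5), (0,4), (0,5), (1,5), (1,4), (2,5), (3,5), (3,4), (2,4),
    (1,3), (1,2), (0,3), (0,2)]

set_option maxHeartbeats 4000000 in
theorem H3_incidence (u : ℂ) (hu : u ^ 2 = u + 1) (i : Fin 6) (k : Fin 15) :
    H3L u i (H3pts u k) = 0 ↔ (i = (H3pair k).1 ∨ i = (H3pair k).2) := by
  fin_cases k <;> fin_cases i <;>
    simp [H3L, H3pts, H3pair, -mul_eq_zero] <;> grind

/-- The 15 points of `Z(H₃)` are exactly the pairwise intersection points of the six lines
`L₁, …, L₆` (a star configuration): each pair of lines meets in exactly one configuration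
point, each configuration point lies on exactly one pair of the lines, and no configuration
point lies on three of the six lines. -/
theorem H3_star_configuration (u : ℂ) (hu : u ^ 2 = u + 1) :
    (∀ i j : Fin 6, i < j →
      ∃! k : Fin 15, H3L u i (H3pts u k) = 0 ∧ H3L u j (H3pts u k) = 0) ∧
    (∀ k : Fin 15, ∃! p : Fin 6 × Fin 6, p.1 < p.2 ∧
      H3L u p.1 (H3pts u k) = 0 ∧ H3L u p.2 (H3pts u k) = 0) ∧
    (∀ k : Fin 15, ¬ ∃ i j l : Fin 6, i < j ∧ j < l ∧
      H3L u i (H3pts u k) = 0 ∧ H3L u j (H3pts u k) = 0 ∧ H3L u l (H3pts u k) = 0) := by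
  simp only [H3_incidence u hu]
  refine ⟨?_, ?_, ?_⟩
  · unfold ExistsUnique
    decide +kernel
  · unfold ExistsUnique
    decide +kernel
  · decide +kernel
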